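/- Let 𝒜 : ℝ^{n₁×n₂} → ℝ^{n₃} be a linear map satisfying the rank restricted isometry property of order 2r with constant δ_{2r} ≤ 0.4663, let α > 0 and 0 < β ≤ 1/(20α). Then every matrix X ∈ ℝ^{n₁×n₂} of rank at most r is the unique minimizer of ‖Z‖_* + β·Φ̂_α(Z) subject to 𝒜Z = 𝒜X. -/

import Mathlib

open Finset Matrix

/-- The penalty function `φ_α(t) = α|t| / (1 + α|t|)`. -/
noncomputable def phi (α t : ℝ) : ℝ := α * |t| / (1 + α * |t|)

/-- The ℓ² norm of a vector. -/
noncomputable def l2 {p : ℕ} (x : Fin p → ℝ) : ℝ := Real.sqrt (∑ i, (x i) ^ 2)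

/-- The Frobenius norm of a matrix. -/
noncomputable def frob {n₁ n₂ : ℕ} (X : Matrix (Fin n₁) (Fin n₂) ℝ) : ℝ :=
  Real.sqrt (∑ i, ∑ j, (X i j) ^ 2)

/-- The rectangular `n₁ × n₂` matrix with `σ` on the diagonal and zeros elsewhere. -/
def diagRect {n₁ n₂ : ℕ} (σ : Fin (min n₁ n₂) → ℝ) : Matrix (Fin n₁) (Fin n₂) ℝ :=
  Matrix.of fun i j =>
    if h : (i : ℕ) = (j : ℕ) then σ ⟨i, lt_min i.isLt (lt_of_eq_of_lt h j.isLt)⟩ else 0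

/-- `σ` is the (nonincreasing) sequence of singular values of `X`:
`σ` is antitone, nonnegative, and `X = U (diag σ) Vᵀ` for orthogonal `U`, `V`. -/
def IsSVDVals {n₁ n₂ : ℕ} (X : Matrix (Fin n₁) (Fin n₂) ℝ)
    (σ : Fin (min n₁ n₂) → ℝ) : Prop :=
  Antitone σ ∧ (∀ i, 0 ≤ σ i) ∧
  ∃ (U : Matrix (Fin n₁) (Fin n₁) ℝ) (V : Matrix (Fin n₂) (Fin n₂) ℝ),
    Uᵀ * U = 1 ∧ Vᵀ * V = 1 ∧ X = U * diagRect σ * Vᵀ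

/-- `𝒜` satisfies the rank restricted isometry property of order `r`
with constant `δ ∈ [0,1)`. -/
def RankRIP {n₁ n₂ n₃ : ℕ} (𝒜 : Matrix (Fin n₁) (Fin n₂) ℝ →ₗ[ℝ] (Fin n₃ → ℝ))
    (r : ℕ) (δ : ℝ) : Prop :=
  0 ≤ δ ∧ δ < 1 ∧ ∀ X : Matrix (Fin n₁) (Fin n₂) ℝ, X.rank ≤ r →
    (1 - δ) * (frob X) ^ 2 ≤ (l2 (𝒜 X)) ^ 2 ∧
    (l2 (𝒜 X)) ^ 2 ≤ (1 + δ) * (frob X) ^ 2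


lemma aux_abel (n : ℕ) (e s : ℕ → ℝ) (he : Antitone e)
    (hs : ∀ k ≤ n, 0 ≤ ∑ i ∈ range k, s i) :
    e n * ∑ i ∈ range n, s i ≤ ∑ i ∈ range n, e i * s i := by
  induction n with
  | zero => simp
  | succ n ih =>
    have h1 := ih (fun k hk => hs k (by omega))
    rw [sum_range_succ (fun i => e i * s i)]
    have h2 := hs (n+1) le_rfl
    have h3 : e (n+1) * ∑ i ∈ range (n+1), s i ≤ e n * ∑ i ∈ range (n+1), s i :=
      mul_le_mul_of_nonneg_right (he (Nat.le_succ n)) h2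
    rw [sum_range_succ, mul_add] at h3
    rw [sum_range_succ, mul_add]
    linarith

/-- Abel summation for `Fin m`. -/
lemma abel_fin {m : ℕ} (e s : Fin m → ℝ) (he : Antitone e) (he0 : ∀ i, 0 ≤ e i)
    (hs : ∀ k : ℕ, 0 ≤ ∑ i : Fin m, if (i : ℕ) < k then s i else 0) :
    0 ≤ ∑ i, e i * s i := by
  set e' : ℕ → ℝ := fun i => if h : i < m then e ⟨i, h⟩ else 0 with he'
  set s' : ℕ → ℝ := fun i => if h : i < m then s ⟨i, h⟩ else 0 with hs'
  have hae : Antitone e' := by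
    intro i j hij
    simp only [he']
    by_cases hj : j < m
    · have hi : i < m := by omega
      simp only [hi, hj, dif_pos]
      exact he (by simpa using hij)
    · simp only [hj, dif_neg, not_false_eq_true]
      split_ifs
      · exact he0 _
      · exact le_rfl
  have hae0 : ∀ i, 0 ≤ e' i := by
    intro i
    simp only [he']
    split_ifs
    · exact he0 _
    · exact le_rfl
  have hss : ∀ k ≤ m, ∑ i ∈ range k, s' i = ∑ i : Fin m, if (i : ℕ) < k then s i else 0 := by
    intro k hk
    have : ∑ i : Fin m, (if (i : ℕ) < k then s i else 0)
        = ∑ i : Fin m, (fun j : ℕ => if j < k then s' j else 0) i := by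
      refine sum_congr rfl fun i _ => ?_
      simp [hs']
    rw [this, Fin.sum_univ_eq_sum_range (fun j : ℕ => if j < k then s' j else 0) m, ← sum_filter]
    congr 1
    ext j
    simp
    omega
  have key := aux_abel m e' s' hae (fun k hk => by rw [hss k hk]; exact hs k)
  have h0 : e' m = 0 := by simp [he']
  rw [h0, zero_mul, ← Fin.sum_univ_eq_sum_range (fun i => e' i * s' i)] at key
  refine key.trans (le_of_eq ?_)
  refine sum_congr rfl fun i _ => ?_
  simp [he', hs']

/-- Weighted sums with weights in `[0,C]`, total weight at most `C*k`. -/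
lemma top_sum {m : ℕ} (a c : Fin m → ℝ) (C : ℝ) (k : ℕ) (ha : Antitone a) (ha0 : ∀ i, 0 ≤ a i)
    (hc0 : ∀ i, 0 ≤ c i) (hc1 : ∀ i, c i ≤ C) (hck : ∑ i, c i ≤ C * k) :
    ∑ i, a i * c i ≤ C * ∑ i : Fin m, if (i : ℕ) < k then a i else 0 := by
  by_cases hk : k < m
  · set p := a ⟨k, hk⟩ with hp
    have h1 : ∀ i : Fin m, (a i - p) * c i ≤ C * if (i : ℕ) < k then a i - p else 0 := by
      intro i
      split_ifs with h
      · have : p ≤ a i := ha (by simpa [Fin.le_def] using h.le)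
        nlinarith [hc1 i]
      · have : a i ≤ p := ha (by simpa [Fin.le_def] using h)
        nlinarith [hc0 i]
    have h2 := sum_le_sum (fun i (_ : i ∈ univ) => h1 i)
    rw [← mul_sum] at h2
    have h3 : ∑ i : Fin m, (if (i : ℕ) < k then a i - p else 0)
        = (∑ i : Fin m, if (i : ℕ) < k then a i else 0) - k * p := by
      rw [← sum_filter, sum_sub_distrib, sum_filter]
      congr 1
      rw [sum_const, nsmul_eq_mul]
      congr 2
      have := Fin.card_filter_val_lt (n := m) (m := k)
      rw [this]; omega
    rw [h3] at h2
    have h4 : ∑ i, (a i - p) * c i = ∑ i, a i * c i - p * ∑ i, c i := by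
      rw [mul_sum, ← sum_sub_distrib]
      exact sum_congr rfl fun i _ => by ring
    rw [h4] at h2
    have := mul_le_mul_of_nonneg_left hck (ha0 ⟨k, hk⟩)
    rw [← hp] at this
    nlinarith
  · rw [mul_sum]
    refine sum_le_sum fun i _ => ?_
    have : (i : ℕ) < k := by omega
    simp only [this, if_true]
    nlinarith [ha0 i, hc1 i]

/-- von Neumann type inequality for substochastic matrices. -/
lemma substoch {m : ℕ} (a e : Fin m → ℝ) (D : Fin m → Fin m → ℝ) (ha : Antitone a)
    (ha0 : ∀ i, 0 ≤ a i) (he : Antitone e) (he0 : ∀ i, 0 ≤ e i) (hD : ∀ i j, 0 ≤ D i j)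
    (hr : ∀ i, ∑ j, D i j ≤ 1) (hc : ∀ j, ∑ i, D i j ≤ 1) :
    ∑ i, ∑ j, a i * e j * D i j ≤ ∑ i, e i * a i := by
  have h := abel_fin e (fun j => a j - ∑ i, a i * D i j) he he0 ?_
  · have : ∑ j, e j * (a j - ∑ i, a i * D i j) = ∑ i, e i * a i - ∑ i, ∑ j, a i * e j * D i j := by
      rw [sum_comm, ← sum_sub_distrib]
      refine sum_congr rfl fun j _ => ?_
      rw [mul_sub, mul_sum]
      congr 1
      exact sum_congr rfl fun i _ => by ring
    linarith
  · intro k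
    have h1 := top_sum a (fun i => ∑ j : Fin m, if (j : ℕ) < k then D i j else 0) 1 k ha ha0
      (fun i => sum_nonneg fun j _ => by split_ifs <;> simp [hD])
      (fun i => (sum_le_sum fun j _ => by split_ifs <;> simp [hD]).trans (hr i)) ?_
    · have : ∑ j : Fin m, (if (j : ℕ) < k then a j - ∑ i, a i * D i j else 0)
          = (∑ j : Fin m, if (j : ℕ) < k then a j else 0)
            - ∑ i, a i * ∑ j : Fin m, (if (j : ℕ) < k then D i j else 0) := by
        simp_rw [mul_sum]
        rw [sum_comm (s := univ) (t := univ) (f := fun i (j : Fin m) => a i * (if (j : ℕ) < k then D i j else 0)), ← sum_sub_distrib]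
        refine sum_congr rfl fun j _ => ?_
        split_ifs <;> simp
      rw [this]; linarith
    · rw [sum_comm]
      calc ∑ j : Fin m, ∑ i, (if (j : ℕ) < k then D i j else 0)
          ≤ ∑ j : Fin m, (if (j : ℕ) < k then (1 : ℝ) else 0) := by
            refine sum_le_sum fun j _ => ?_
            split_ifs
            · exact hc j
            · simp
        _ ≤ 1 * k := by
            rw [← sum_filter, sum_const, nsmul_eq_mul, mul_one, one_mul]
            have := Fin.card_filter_val_lt (n := m) (m := k)
            rw [this]
            exact_mod_cast min_le_right _ _

/-- `⟨Tu,Tv⟩² ‖u‖² ≤ κ² ‖Tu‖⁴ ‖v‖²` with `κ = 0.53`, from two-dimensional RIP.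
`U = ‖u‖²`, `V = ‖v‖²`, `P = ‖Tu‖²`, `Q = ‖Tv‖²`, `C = ⟨Tu,Tv⟩`. -/
lemma rip_pair (δ U V P Q C : ℝ) (hU : 0 ≤ U) (hV : 0 ≤ V) (hδ0 : 0 ≤ δ) (hδ : δ ≤ 0.4663)
    (h : ∀ a b : ℝ, (1 - δ) * (a^2 * U + b^2 * V) ≤ a^2 * P + 2 * a * b * C + b^2 * Q ∧
      a^2 * P + 2 * a * b * C + b^2 * Q ≤ (1 + δ) * (a^2 * U + b^2 * V)) :
    C ^ 2 * U ≤ 0.53 ^ 2 * P ^ 2 * V := by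
  have disc : ∀ x y z : ℝ, (∀ a b : ℝ, 0 ≤ a^2 * x + 2 * a * b * y + b^2 * z) → y^2 ≤ x * z := by
    intro x y z hh
    have h1 := hh y (-x)
    have h2 := hh z (-y)
    have h3 := hh 1 0
    have h4 := hh 0 1
    have h5 := hh 1 (-y)
    have h6 := hh (-y) 1
    by_contra hcon
    push Not at hcon
    have hx : 0 ≤ x := by nlinarith
    have hz : 0 ≤ z := by nlinarith
    have e1 : x * (x * z - y^2) ≥ 0 := by nlinarith
    have hx0 : x = 0 := by
      by_contra hne
      have : 0 < x := lt_of_le_of_ne hx (Ne.symm hne)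
      nlinarith
    have e2 : z * (x * z - y^2) ≥ 0 := by nlinarith
    have hz0 : z = 0 := by
      by_contra hne
      have : 0 < z := lt_of_le_of_ne hz (Ne.symm hne)
      nlinarith
    subst hx0; subst hz0
    nlinarith
  -- t = P - U, w = Q - V
  have k1 : C^2 ≤ (δ * U - (P - U)) * (δ * V - (Q - V)) := by
    have := disc (δ * U - (P - U)) (-C) (δ * V - (Q - V)) (fun a b => by nlinarith [(h a b).2])
    nlinarith
  have k2 : C^2 ≤ (δ * U + (P - U)) * (δ * V + (Q - V)) :=
    disc (δ * U + (P - U)) C (δ * V + (Q - V)) (fun a b => by nlinarith [(h a b).1])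
  have b1 : 0 ≤ δ * U - (P - U) := by nlinarith [(h 1 0).2]
  have b2 : 0 ≤ δ * U + (P - U) := by nlinarith [(h 1 0).1]
  -- 2δU C² ≤ 2δV (δ²U² - t²)
  have k3 : δ * (C^2 * U) ≤ δ * (V * (δ^2 * U^2 - (P - U)^2)) := by
    nlinarith [mul_le_mul_of_nonneg_left k1 b2, mul_le_mul_of_nonneg_left k2 b1]
  have k4 : C^2 * U ≤ V * (δ^2 * U^2 - (P - U)^2) := by
    rcases hδ0.lt_or_eq with hp | hp
    · exact le_of_mul_le_mul_left k3 hp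
    · rw [← hp] at b1 b2 k1 ⊢
      have : P - U = 0 := by linarith
      rw [this] at k1 ⊢
      have : C^2 ≤ 0 := by nlinarith
      nlinarith [sq_nonneg C]
  have k5 : δ^2 * U^2 - (P - U)^2 ≤ 0.53^2 * P^2 := by
    have hd : δ^2 ≤ 0.4663^2 := by nlinarith
    have : δ^2 * U^2 ≤ 0.4663^2 * U^2 := mul_le_mul_of_nonneg_right hd (sq_nonneg U)
    nlinarith [sq_nonneg (P - 0.78*U), sq_nonneg U]
  nlinarith [mul_le_mul_of_nonneg_left k5 hV]

/-- `k`-th block of length `r` of a vector. -/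
noncomputable def blk {m : ℕ} (r : ℕ) (τ : Fin m → ℝ) (k : ℕ) : Fin m → ℝ :=
  fun i => if (i : ℕ) / r = k then τ i else 0

lemma blk_card_le (m r k : ℕ) (hr : 0 < r) : (univ.filter fun i : Fin m => (i : ℕ) / r = k).card ≤ r := by
  have := card_le_card_of_injOn (s := univ.filter fun i : Fin m => (i : ℕ) / r = k)
    (t := range r) (fun i => (i : ℕ) % r) (fun i _ => by simpa using Nat.mod_lt _ hr) ?_
  · simpa using this
  · intro i hi j hj hij
    simp only [coe_filter, mem_univ, true_and, Set.mem_ofPred_eq] at hi hj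
    apply Fin.ext
    rw [← Nat.div_add_mod (i : ℕ) r, ← Nat.div_add_mod (j : ℕ) r, hi, hj]
    simpa using hij

lemma le_blk_card (m r k : ℕ) (i : Fin m) (hi : (i : ℕ) / r = k + 1) (hr : 0 < r) :
    r ≤ (univ.filter fun j : Fin m => (j : ℕ) / r = k).card := by
  have hle : (k + 1) * r ≤ i := by
    rw [← hi]; exact Nat.div_mul_le_self _ _
  have hb : ∀ s : Fin r, k * r + s < m := by
    intro s
    have := s.isLt
    have := i.isLt
    nlinarith
  have := card_le_card_of_injOn (s := (univ : Finset (Fin r)))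
    (t := univ.filter fun j : Fin m => (j : ℕ) / r = k) (fun s => ⟨k * r + s, hb s⟩) ?_ ?_
  · simpa using this
  · intro s _
    simp only [coe_filter, mem_univ, true_and, Set.mem_ofPred_eq]
    rw [mul_comm, Nat.mul_add_div hr, Nat.div_eq_of_lt s.isLt, add_zero]
  · intro s _ t _ h
    simp only [Fin.mk.injEq] at h
    exact Fin.ext (by omega)

lemma blk_sum {m : ℕ} (r : ℕ) (τ : Fin m → ℝ) : ∑ k ∈ range m, blk r τ k = τ := by
  ext i
  rw [Finset.sum_apply]
  simp only [blk]
  rw [sum_ite_eq, if_pos]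
  rw [mem_range]
  exact lt_of_le_of_lt (Nat.div_le_self _ _) i.isLt

lemma blk_norm {m : ℕ} (r : ℕ) (hr : 0 < r) (τ : Fin m → ℝ) (hτ : Antitone τ) (h0 : ∀ i, 0 ≤ τ i) (k : ℕ) :
    r * (blk r τ (k+1) ⬝ᵥ blk r τ (k+1)) ≤ (∑ i, blk r τ k i) * ∑ i, blk r τ (k+1) i := by
  have h1 : ∀ i : Fin m, (i : ℕ) / r = k + 1 → r * τ i ≤ ∑ j, blk r τ k j := by
    intro i hi
    have hc := le_blk_card m r k i hi hr
    calc r * τ i ≤ (univ.filter fun j : Fin m => (j : ℕ) / r = k).card * τ i :=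
          mul_le_mul_of_nonneg_right (by exact_mod_cast hc) (h0 i)
      _ = ∑ j ∈ univ.filter (fun j : Fin m => (j : ℕ) / r = k), τ i := by
          rw [sum_const, nsmul_eq_mul]
      _ ≤ ∑ j ∈ univ.filter (fun j : Fin m => (j : ℕ) / r = k), τ j := by
          refine sum_le_sum fun j hj => hτ ?_
          rw [mem_filter] at hj
          by_contra hcon
          have : (i : ℕ) ≤ j := by
            rw [not_le] at hcon
            exact hcon.le
          have := Nat.div_le_div_right (c := r) this
          omega
      _ = _ := by rw [sum_filter]; rfl
  rw [dotProduct, mul_sum, mul_sum]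
  refine sum_le_sum fun i _ => ?_
  by_cases hi : (i : ℕ) / r = k + 1
  · simp only [blk, hi, if_true]
    have := mul_le_mul_of_nonneg_right (h1 i hi) (h0 i)
    simp only [blk] at this
    linarith
  · simp [blk, hi]

lemma vec_cs {m n r : ℕ} (hr : 0 < r) (T : (Fin m → ℝ) →ₗ[ℝ] (Fin n → ℝ)) (δ : ℝ)
    (hδ0 : 0 ≤ δ) (hδ : δ ≤ 0.4663)
    (hT : ∀ c : Fin m → ℝ, (univ.filter fun i => c i ≠ 0).card ≤ 2 * r →
      (1 - δ) * (c ⬝ᵥ c) ≤ T c ⬝ᵥ T c ∧ T c ⬝ᵥ T c ≤ (1 + δ) * (c ⬝ᵥ c))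
    (τ : Fin m → ℝ) (hτ : Antitone τ) (h0 : ∀ i, 0 ≤ τ i) (hTτ : T τ = 0) :
    ∑ i, blk r τ 0 i ≤ 0.53 * ((∑ i, τ i - ∑ i, blk r τ 0 i) + (∑ i, blk r τ 0 i) / 2) := by
  set L : ℕ → ℝ := fun k => ∑ i, blk r τ k i with hL
  have hL0 : ∀ k, 0 ≤ L k := fun k => sum_nonneg fun i _ => by
    simp only [blk]; split_ifs <;> simp [h0]
  have hLsum : ∑ k ∈ range m, L k = ∑ i, τ i := by
    rw [hL, sum_comm]
    conv_rhs => rw [← blk_sum r τ]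
    simp
  rcases Nat.eq_zero_or_pos m with hm | hm
  · subst hm; simp
  obtain ⟨M, rfl⟩ : ∃ M, m = M + 1 := ⟨m - 1, by omega⟩
  have hr' : (0 : ℝ) < r := by exact_mod_cast hr
  set N : ℕ → ℝ := fun k => Real.sqrt (blk r τ k ⬝ᵥ blk r τ k) with hN
  have hqq : ∀ k, 0 ≤ blk r τ k ⬝ᵥ blk r τ k := fun k => sum_nonneg fun i _ => mul_self_nonneg _
  -- bound on norms of tail blocks
  have hNk : ∀ k, Real.sqrt r * N (k+1) ≤ (L k + L (k+1)) / 2 := by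
    intro k
    rw [hN, ← Real.sqrt_mul hr'.le]
    refine Real.sqrt_le_iff.2 ⟨by linarith [hL0 k, hL0 (k+1)], ?_⟩
    have := blk_norm r hr τ hτ h0 k
    have e : L k * L (k+1) ≤ ((L k + L (k+1)) / 2)^2 := by nlinarith [sq_nonneg (L k - L (k+1))]
    exact this.trans e
  -- lower bound on head
  have hhead : L 0 ≤ Real.sqrt r * N 0 := by
    rw [hN, ← Real.sqrt_mul hr'.le]
    refine Real.le_sqrt_of_sq_le ?_
    have h1 : L 0 = ∑ i ∈ univ.filter (fun i : Fin (M+1) => (i : ℕ) / r = 0), τ i := by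
      rw [sum_filter]; rfl
    have h2 : blk r τ 0 ⬝ᵥ blk r τ 0 = ∑ i ∈ univ.filter (fun i : Fin (M+1) => (i : ℕ) / r = 0), τ i ^ 2 := by
      rw [sum_filter, dotProduct]
      refine sum_congr rfl fun i _ => ?_
      simp only [blk]
      split_ifs
      · ring
      · simp
    rw [h1, h2]
    refine sq_sum_le_card_mul_sum_sq.trans ?_
    refine mul_le_mul_of_nonneg_right ?_ (sum_nonneg fun i _ => sq_nonneg _)
    exact_mod_cast blk_card_le (M+1) r 0 hr
  -- pair estimate
  have hpair : ∀ k, |T (blk r τ 0) ⬝ᵥ T (blk r τ (k+1))| * N 0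
      ≤ 0.53 * (T (blk r τ 0) ⬝ᵥ T (blk r τ 0)) * N (k+1) := by
    intro k
    set u := blk r τ 0 with hu
    set v := blk r τ (k+1) with hv
    have huv : u ⬝ᵥ v = 0 := by
      refine sum_eq_zero fun i _ => ?_
      simp only [hu, hv, blk]
      split_ifs <;> first | omega | simp
    have hTu : 0 ≤ T u ⬝ᵥ T u := sum_nonneg fun i _ => mul_self_nonneg _
    have key := rip_pair δ (u ⬝ᵥ u) (v ⬝ᵥ v) (T u ⬝ᵥ T u) (T v ⬝ᵥ T v) (T u ⬝ᵥ T v)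
      (hqq 0) (hqq _) hδ0 hδ ?_
    · have := Real.sqrt_le_sqrt key
      rw [Real.sqrt_mul (sq_nonneg _), Real.sqrt_sq_eq_abs, ← mul_pow,
        Real.sqrt_mul (sq_nonneg _), Real.sqrt_sq (by positivity)] at this
      exact this
    · intro a b
      have e1 : (a • u + b • v) ⬝ᵥ (a • u + b • v) = a^2 * (u ⬝ᵥ u) + b^2 * (v ⬝ᵥ v) := by
        simp only [add_dotProduct, dotProduct_add, smul_dotProduct, dotProduct_smul, smul_eq_mul,
          huv, dotProduct_comm v u]
        ring
      have e2 : T (a • u + b • v) ⬝ᵥ T (a • u + b • v)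
          = a^2 * (T u ⬝ᵥ T u) + 2 * a * b * (T u ⬝ᵥ T v) + b^2 * (T v ⬝ᵥ T v) := by
        simp only [map_add, map_smul, add_dotProduct, dotProduct_add, smul_dotProduct, dotProduct_smul, smul_eq_mul,
          dotProduct_comm (T v) (T u)]
        ring
      rw [← e1, ← e2]
      refine hT _ ?_
      have hsub : (univ.filter fun i => (a • u + b • v) i ≠ 0)
          ⊆ (univ.filter fun i : Fin (M+1) => (i : ℕ) / r = 0) ∪ (univ.filter fun i : Fin (M+1) => (i : ℕ) / r = k + 1) := by
        intro i hi
        rw [mem_filter] at hi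
        rw [mem_union, mem_filter, mem_filter]
        by_contra hcon
        push Not at hcon
        apply hi.2
        simp only [Pi.add_apply, Pi.smul_apply, smul_eq_mul, hu, hv, blk]
        rw [if_neg (hcon.1 (mem_univ _)), if_neg (hcon.2 (mem_univ _))]
        ring
      refine (card_le_card hsub).trans ((card_union_le _ _).trans ?_)
      have := blk_card_le (M+1) r 0 hr
      have := blk_card_le (M+1) r (k+1) hr
      omega
  have hN0 : 0 ≤ N 0 := Real.sqrt_nonneg _
  have hmain : N 0 ≤ 0.53 * ∑ k ∈ range M, N (k+1) := by
    set P := T (blk r τ 0) ⬝ᵥ T (blk r τ 0) with hP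
    have hP0 : 0 ≤ P := sum_nonneg fun i _ => mul_self_nonneg _
    have hexp : P = - ∑ k ∈ range M, T (blk r τ 0) ⬝ᵥ T (blk r τ (k+1)) := by
      have h1 : T (blk r τ 0) ⬝ᵥ T τ = 0 := by rw [hTτ]; simp
      rw [← blk_sum r τ, map_sum, dotProduct_sum, sum_range_succ'] at h1
      rw [blk_sum] at h1
      linarith
    have h2 : P * N 0 ≤ P * (0.53 * ∑ k ∈ range M, N (k+1)) := by
      calc P * N 0 = (- ∑ k ∈ range M, T (blk r τ 0) ⬝ᵥ T (blk r τ (k+1))) * N 0 := by rw [← hexp]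
        _ = ∑ k ∈ range M, (-(T (blk r τ 0) ⬝ᵥ T (blk r τ (k+1)))) * N 0 := by
            rw [← sum_neg_distrib, sum_mul]
        _ ≤ ∑ k ∈ range M, 0.53 * P * N (k+1) := by
            refine sum_le_sum fun k _ => le_trans ?_ (hpair k)
            exact mul_le_mul_of_nonneg_right (neg_le_abs _) hN0
        _ = _ := by rw [← mul_sum]; ring
    rcases hP0.lt_or_eq with hp | hp
    · exact le_of_mul_le_mul_left h2 hp
    · have h3 := (hT (blk r τ 0) ?_).1
      · rw [← hP, ← hp] at h3
        have h4 : blk r τ 0 ⬝ᵥ blk r τ 0 ≤ 0 := by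
          by_contra hcon
          push Not at hcon
          nlinarith
        have : N 0 = 0 := Real.sqrt_eq_zero_of_nonpos h4
        rw [this]
        have : 0 ≤ ∑ k ∈ range M, N (k+1) := sum_nonneg fun k _ => Real.sqrt_nonneg _
        positivity
      · have := blk_card_le (M+1) r 0 hr
        refine le_trans (card_le_card ?_) (this.trans (by omega))
        intro i hi
        rw [mem_filter] at hi ⊢
        refine ⟨hi.1, ?_⟩
        by_contra hcon
        exact hi.2 (by simp [blk, hcon])
  have hs : Real.sqrt r * ∑ k ∈ range M, N (k+1) ≤ ∑ k ∈ range M, (L k + L (k+1)) / 2 := by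
    rw [mul_sum]; exact sum_le_sum fun k _ => hNk k
  have hs2 : ∑ k ∈ range M, (L k + L (k+1)) / 2 ≤ (∑ i, τ i - L 0) + L 0 / 2 := by
    rw [← sum_div, sum_add_distrib]
    have e1 := sum_range_succ L M
    have e2 := sum_range_succ' L M
    have := hL0 M
    linarith
  have := mul_le_mul_of_nonneg_left hmain (Real.sqrt_nonneg (r : ℝ))
  change L 0 ≤ 0.53 * ((∑ i, τ i - L 0) + L 0 / 2)
  linarith

section MatrixAux
variable {n m p : Type*} [Fintype n] [Fintype m] [Fintype p] [DecidableEq n] [DecidableEq m] [DecidableEq p]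

lemma dot_mulVec_T (A : Matrix n m ℝ) (x : m → ℝ) (y : n → ℝ) :
    (A *ᵥ x) ⬝ᵥ y = x ⬝ᵥ (Aᵀ *ᵥ y) := by
  rw [dotProduct_comm, dotProduct_mulVec, dotProduct_comm, mulVec_transpose]

lemma iso_dot (A : Matrix n m ℝ) (hA : Aᵀ * A = 1) (x y : m → ℝ) :
    (A *ᵥ x) ⬝ᵥ (A *ᵥ y) = x ⬝ᵥ y := by
  rw [dot_mulVec_T, mulVec_mulVec, hA, one_mulVec]

lemma bessel (A : Matrix n m ℝ) (hA : Aᵀ * A = 1) (x : n → ℝ) :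
    (Aᵀ *ᵥ x) ⬝ᵥ (Aᵀ *ᵥ x) ≤ x ⬝ᵥ x := by
  have h : 0 ≤ (x - A *ᵥ (Aᵀ *ᵥ x)) ⬝ᵥ (x - A *ᵥ (Aᵀ *ᵥ x)) :=
    sum_nonneg fun i _ => mul_self_nonneg _
  rw [sub_dotProduct, dotProduct_sub, dotProduct_sub, iso_dot A hA, dot_mulVec_T,
    dotProduct_comm x (A *ᵥ _), dot_mulVec_T] at h
  linarith

lemma tr_thin (A : Matrix n m ℝ) (B : Matrix p m ℝ) (σ : m → ℝ) (W : Matrix n p ℝ) :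
    trace ((A * diagonal σ * Bᵀ)ᵀ * W) = ∑ i, σ i * (Aᵀ * W * B) i i := by
  rw [transpose_mul, transpose_mul, transpose_transpose, diagonal_transpose, Matrix.mul_assoc,
    Matrix.trace_mul_comm, Matrix.mul_assoc, Matrix.mul_assoc, trace]
  refine sum_congr rfl fun i _ => ?_
  rw [diag_apply, diagonal_mul, Matrix.mul_assoc]

lemma entry_eq (A : Matrix n m ℝ) (B : Matrix p m ℝ) (W : Matrix n p ℝ) (i j : m) :
    (Aᵀ * W * B) i j = (fun a => A a i) ⬝ᵥ (W *ᵥ fun b => B b j) := by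
  rw [Matrix.mul_assoc, Matrix.mul_apply]
  simp only [dotProduct, mulVec, Matrix.mul_apply, transpose_apply]

lemma col_dot (A : Matrix n m ℝ) (hA : Aᵀ * A = 1) (i j : m) :
    (fun a => A a i) ⬝ᵥ (fun a => A a j) = if i = j then 1 else 0 := by
  have := congrFun (congrFun hA i) j
  rw [Matrix.one_apply] at this
  rw [← this, Matrix.mul_apply]
  rfl

lemma dot_le (x y : n → ℝ) : x ⬝ᵥ y ≤ (x ⬝ᵥ x + y ⬝ᵥ y) / 2 := by
  have h : 0 ≤ (x - y) ⬝ᵥ (x - y) := sum_nonneg fun i _ => mul_self_nonneg _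
  rw [sub_dotProduct, dotProduct_sub, dotProduct_sub, dotProduct_comm y x] at h
  linarith

lemma neg_dot_le (x y : n → ℝ) : -(x ⬝ᵥ y) ≤ (x ⬝ᵥ x + y ⬝ᵥ y) / 2 := by
  have := dot_le (-x) y
  rw [neg_dotProduct, neg_dotProduct, dotProduct_neg, neg_neg] at this
  linarith

/-- row sums of squares of `AᵀC` are at most one. -/
lemma row_sq (A C : Matrix n m ℝ) (hA : Aᵀ * A = 1) (hC : Cᵀ * C = 1) (i : m) :
    ∑ j, ((Aᵀ * C) i j) ^ 2 ≤ 1 := by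
  have h := bessel C hC (fun a => A a i)
  rw [col_dot A hA, if_pos rfl] at h
  refine le_trans (le_of_eq ?_) h
  refine sum_congr rfl fun j _ => ?_
  have : (Cᵀ *ᵥ fun a => A a i) j = (Aᵀ * C) i j := by
    simp only [mulVec, dotProduct, Matrix.mul_apply, transpose_apply]
    exact sum_congr rfl fun _ _ => mul_comm _ _
  rw [this, sq]

lemma col_sq (A C : Matrix n m ℝ) (hA : Aᵀ * A = 1) (hC : Cᵀ * C = 1) (j : m) :
    ∑ i, ((Aᵀ * C) i j) ^ 2 ≤ 1 := by
  have h := row_sq C A hC hA j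
  refine le_trans (le_of_eq ?_) h
  refine sum_congr rfl fun i _ => ?_
  have : (Cᵀ * A) = (Aᵀ * C)ᵀ := by simp
  rw [this, transpose_apply]

/-- inner product of two thin SVDs -/
lemma tr_two_thin (A C : Matrix n m ℝ) (B E : Matrix p m ℝ) (σ e : m → ℝ) 
    (hA : Aᵀ * A = 1) (hB : Bᵀ * B = 1) (hC : Cᵀ * C = 1) (hE : Eᵀ * E = 1) 
    (hσ : ∀ i, 0 ≤ σ i) (he : ∀ i, 0 ≤ e i) :
    ∃ D : m → m → ℝ, (∀ i j, 0 ≤ D i j) ∧ (∀ i, ∑ j, D i j ≤ 1) ∧ (∀ j, ∑ i, D i j ≤ 1) ∧ 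
    trace ((A * diagonal σ * Bᵀ)ᵀ * (C * diagonal e * Eᵀ)) ≤ ∑ i, ∑ j, σ i * e j * D i j := by
  refine ⟨fun i j => (((Aᵀ * C) i j)^2 + ((Bᵀ * E) i j)^2) / 2, fun i j => by positivity, ?_, ?_, ?_⟩
  · intro i
    rw [← sum_div, sum_add_distrib]
    linarith [row_sq A C hA hC i, row_sq B E hB hE i]
  · intro i
    rw [← sum_div, sum_add_distrib]
    linarith [col_sq A C hA hC i, col_sq B E hB hE i]
  · rw [tr_thin]
    refine sum_le_sum fun i _ => ?_
    have : (Aᵀ * (C * diagonal e * Eᵀ) * B) i i = ∑ j, (Aᵀ * C) i j * e j * (Bᵀ * E) i j := by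
      have e1 : Aᵀ * (C * diagonal e * Eᵀ) * B = (Aᵀ * C) * diagonal e * (Bᵀ * E)ᵀ := by
        simp only [transpose_mul, transpose_transpose, Matrix.mul_assoc]
      rw [e1, Matrix.mul_apply]
      refine sum_congr rfl fun j _ => ?_
      rw [mul_diagonal, transpose_apply]
    rw [this, mul_sum]
    refine sum_le_sum fun j _ => ?_
    have h1 := mul_nonneg (hσ i) (he j)
    have h2 : (Aᵀ * C) i j * (Bᵀ * E) i j ≤ (((Aᵀ * C) i j)^2 + ((Bᵀ * E) i j)^2) / 2 := by
      nlinarith [sq_nonneg ((Aᵀ * C) i j - (Bᵀ * E) i j)]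
    calc _ = σ i * e j * ((Aᵀ * C) i j * (Bᵀ * E) i j) := by ring
      _ ≤ _ := mul_le_mul_of_nonneg_left h2 h1

lemma orth_dot_le (R : Matrix n n ℝ) (hR : Rᵀ * R = 1) (x : n → ℝ) : x ⬝ᵥ (R *ᵥ x) ≤ x ⬝ᵥ x := by
  have := dot_le x (R *ᵥ x)
  rw [iso_dot R hR] at this
  linarith

lemma neg_orth_dot_le (R : Matrix n n ℝ) (hR : Rᵀ * R = 1) (x : n → ℝ) : -(x ⬝ᵥ (R *ᵥ x)) ≤ x ⬝ᵥ x := by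
  have := neg_dot_le x (R *ᵥ x)
  rw [iso_dot R hR] at this
  linarith

/-- one reflection step -/
lemma reflect_step (R : Matrix n n ℝ) (hR : Rᵀ * R = 1) (x q : n → ℝ) (hx : x ⬝ᵥ x = q ⬝ᵥ q) :
    ∃ R' : Matrix n n ℝ, R'ᵀ * R' = 1 ∧ trace R - 2 ≤ trace R' ∧ R' *ᵥ x = R *ᵥ x + (q - R *ᵥ x) ∧
      ∀ y, (R *ᵥ x) ⬝ᵥ (R *ᵥ y) = q ⬝ᵥ (R *ᵥ y) → R' *ᵥ y = R *ᵥ y := by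
  by_cases hc : R *ᵥ x = q
  · exact ⟨R, hR, by linarith, by rw [hc]; simp, fun y _ => rfl⟩
  set p := R *ᵥ x with hp
  set w := p - q with hw
  have hpp : p ⬝ᵥ p = q ⬝ᵥ q := by rw [hp, iso_dot R hR, hx]
  have hw0 : 0 < w ⬝ᵥ w := by
    have h1 : 0 ≤ w ⬝ᵥ w := sum_nonneg fun i _ => mul_self_nonneg _
    refine lt_of_le_of_ne h1 fun h => ?_
    have : w = 0 := dotProduct_self_eq_zero.1 h.symm
    exact hc (sub_eq_zero.1 this)
  set d := w ⬝ᵥ w with hd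
  set S : Matrix n n ℝ := 1 - (2 / d) • vecMulVec w w with hS
  have hSv : ∀ y, S *ᵥ y = y - (2 / d * (w ⬝ᵥ y)) • w := by
    intro y
    rw [hS, sub_mulVec, one_mulVec, smul_mulVec, vecMulVec_mulVec]
    simp [smul_smul]
  have hST : Sᵀ = S := by
    rw [hS, transpose_sub, transpose_one, transpose_smul, transpose_vecMulVec]
  have hSS : Sᵀ * S = 1 := by
    rw [hST]
    apply Matrix.ext_of_mulVec_single
    intro i
    rw [← mulVec_mulVec, hSv, hSv, one_mulVec, dotProduct_sub, dotProduct_smul, ← hd]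
    rw [sub_sub, ← add_smul]
    have : 2 / d * (w ⬝ᵥ Pi.single i 1) + 2 / d * (w ⬝ᵥ Pi.single i 1 - (2 / d * (w ⬝ᵥ Pi.single i 1)) • d) = 0 := by
      rw [smul_eq_mul]; field_simp; ring
    rw [this, zero_smul, sub_zero]
  refine ⟨S * R, ?_, ?_, ?_, ?_⟩
  · rw [transpose_mul, Matrix.mul_assoc, ← Matrix.mul_assoc _ S, hSS, Matrix.one_mul, hR]
  · rw [hS, Matrix.sub_mul, Matrix.one_mul, trace_sub, Matrix.smul_mul, trace_smul, vecMulVec_mul, trace_vecMulVec,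
      ← mulVec_transpose, dotProduct_comm, dot_mulVec_T, transpose_transpose, smul_eq_mul]
    have := orth_dot_le R hR w
    rw [← hd] at this
    have h2 : 2 / d * (w ⬝ᵥ R *ᵥ w) ≤ 2 := by
      rw [div_mul_eq_mul_div, div_le_iff₀ hw0]; linarith
    linarith
  · rw [← mulVec_mulVec, ← hp, hSv]
    have h1 : 2 / d * (w ⬝ᵥ p) = 1 := by
      have : d = 2 * (w ⬝ᵥ p) := by
        rw [hd, hw]
        simp only [sub_dotProduct, dotProduct_sub, dotProduct_comm q p]
        linarith
      rw [div_mul_eq_mul_div, div_eq_one_iff_eq hw0.ne']; exact this.symm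
    rw [h1, one_smul, hw]
    abel
  · intro y hy
    rw [← mulVec_mulVec, hSv]
    have : w ⬝ᵥ (R *ᵥ y) = 0 := by rw [hw, sub_dotProduct, hy, sub_self]
    rw [this]; simp

end MatrixAux

lemma exists_rot {n m : ℕ} (P Q : Matrix (Fin n) (Fin m) ℝ) (hP : Pᵀ * P = 1) (hQ : Qᵀ * Q = 1) (k : ℕ) :
    ∃ R : Matrix (Fin n) (Fin n) ℝ, Rᵀ * R = 1 ∧ (n : ℝ) - 2 * k ≤ trace R ∧
      ∀ i : Fin m, (i : ℕ) < k → R *ᵥ (fun a => P a i) = fun a => Q a i := by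
  induction k with
  | zero => exact ⟨1, by simp, by simp, by simp⟩
  | succ k ih =>
    obtain ⟨R, hR, ht, hRP⟩ := ih
    by_cases hk : k < m
    · obtain ⟨R', h1, h2, h3, h4⟩ := reflect_step R hR (fun a => P a ⟨k, hk⟩) (fun a => Q a ⟨k, hk⟩)
        (by rw [col_dot P hP, col_dot Q hQ])
      refine ⟨R', h1, by push_cast; linarith, ?_⟩
      intro i hi
      rcases Nat.lt_succ_iff_lt_or_eq.1 hi with hi | hi
      · rw [h4, hRP i hi]
        rw [iso_dot R hR, hRP i hi, col_dot P hP, col_dot Q hQ]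
      · have : i = ⟨k, hk⟩ := Fin.ext hi
        subst this
        rw [h3]; simp
    · refine ⟨R, hR, by push_cast; linarith, fun i hi => hRP i (by omega)⟩

lemma tr_compress {n m : ℕ} (R : Matrix (Fin n) (Fin n) ℝ) (hR : Rᵀ * R = 1)
    (A : Matrix (Fin n) (Fin m) ℝ) (hA : Aᵀ * A = 1) :
    trace R - n + m ≤ ∑ i, (Aᵀ * R * A) i i := by
  set G : Matrix (Fin n) (Fin n) ℝ := 1 - A * Aᵀ with hG
  have hGT : Gᵀ = G := by simp [hG]
  have hGG : G * G = G := by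
    have : A * Aᵀ * (A * Aᵀ) = A * Aᵀ := by
      rw [Matrix.mul_assoc, ← Matrix.mul_assoc Aᵀ A, hA, Matrix.one_mul]
    rw [hG, Matrix.sub_mul, Matrix.mul_sub, Matrix.mul_sub, this]; simp
  have h1 : trace (Gᵀ * R * G) ≤ trace (Gᵀ * 1 * G) := by
    refine sum_le_sum fun i _ => ?_
    rw [diag_apply, diag_apply, entry_eq, entry_eq, one_mulVec]
    exact orth_dot_le R hR _
  have hAA : trace (A * Aᵀ) = m := by
    rw [trace_mul_comm, hA]; simp
  have h2 : trace (Gᵀ * 1 * G) = (n : ℝ) - m := by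
    rw [Matrix.mul_one, hGT, hGG, hG, trace_sub, hAA]; simp
  have h3 : trace (Gᵀ * R * G) = trace R - ∑ i, (Aᵀ * R * A) i i := by
    rw [trace_mul_comm, ← Matrix.mul_assoc, hGT, hGG, hG, Matrix.sub_mul, Matrix.one_mul, trace_sub]
    congr 1
    rw [Matrix.mul_assoc, trace_mul_comm]
    rfl
  linarith

lemma nuc_bound {n p m : ℕ} (k : ℕ) (A A2 A' : Matrix (Fin n) (Fin m) ℝ)
    (B B2 B' : Matrix (Fin p) (Fin m) ℝ) (σ ζ τ : Fin m → ℝ)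
    (hA : Aᵀ * A = 1) (hA2 : A2ᵀ * A2 = 1) (hA' : A'ᵀ * A' = 1)
    (hB : Bᵀ * B = 1) (hB2 : B2ᵀ * B2 = 1) (hB' : B'ᵀ * B' = 1) (hB'' : B' * B'ᵀ = 1)
    (hζ : ∀ i, 0 ≤ ζ i) (hτ0 : ∀ i, 0 ≤ τ i) (hτ : Antitone τ)
    (hσk : ∀ i : Fin m, k ≤ (i : ℕ) → σ i = 0)
    (hZ : A2 * diagonal ζ * B2ᵀ = A * diagonal σ * Bᵀ + A' * diagonal τ * B'ᵀ) :
    ∑ i, σ i + ∑ i, τ i - 2 * ∑ i : Fin m, (if (i : ℕ) < k then τ i else 0) ≤ ∑ i, ζ i := by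
  set O := A' * B'ᵀ with hO
  have hOO : Oᵀ * O = 1 := by
    rw [hO, transpose_mul, transpose_transpose, Matrix.mul_assoc, ← Matrix.mul_assoc A'ᵀ, hA',
      Matrix.one_mul, hB'']
  have hP : (O * B)ᵀ * (O * B) = 1 := by
    rw [transpose_mul, Matrix.mul_assoc, ← Matrix.mul_assoc Oᵀ, hOO, Matrix.one_mul, hB]
  obtain ⟨R, hR, htr, hRP⟩ := exists_rot (O * B) A hP hA k
  set W := R * O with hW
  have hWW : Wᵀ * W = 1 := by
    rw [hW, transpose_mul, Matrix.mul_assoc, ← Matrix.mul_assoc Rᵀ, hR, Matrix.one_mul, hOO]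
  have h1 : trace ((A2 * diagonal ζ * B2ᵀ)ᵀ * W) ≤ ∑ i, ζ i := by
    rw [tr_thin]
    refine sum_le_sum fun i _ => ?_
    have : (A2ᵀ * W * B2) i i ≤ 1 := by
      rw [entry_eq]
      refine (dot_le _ _).trans ?_
      rw [iso_dot W hWW, col_dot A2 hA2, col_dot B2 hB2]
      simp
    nlinarith [hζ i]
  have h2 : trace ((A * diagonal σ * Bᵀ)ᵀ * W) = ∑ i, σ i := by
    rw [tr_thin]
    refine sum_congr rfl fun i _ => ?_
    by_cases hi : (i : ℕ) < k
    · have : (Aᵀ * W * B) i i = 1 := by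
        rw [entry_eq, hW, ← mulVec_mulVec]
        have e : O *ᵥ (fun b => B b i) = fun a => (O * B) a i := by
          ext a; simp [mulVec, dotProduct, Matrix.mul_apply]
        rw [e, hRP i hi, col_dot A hA, if_pos rfl]
      rw [this, mul_one]
    · rw [hσk i (by omega), zero_mul]
  have h3 : trace ((A' * diagonal τ * B'ᵀ)ᵀ * W) = ∑ i, τ i - ∑ i, τ i * (1 - (A'ᵀ * R * A') i i) := by
    rw [tr_thin, ← sum_sub_distrib]
    refine sum_congr rfl fun i _ => ?_
    have : A'ᵀ * W * B' = A'ᵀ * R * A' := by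
      rw [hW, hO]
      simp only [Matrix.mul_assoc, hB', Matrix.mul_one]
    rw [this]; ring
  have h4 := top_sum τ (fun i => 1 - (A'ᵀ * R * A') i i) 2 k hτ hτ0 ?_ ?_ ?_
  · rw [hZ, transpose_add, Matrix.add_mul, trace_add, h2, h3] at h1
    linarith
  · intro i
    have := orth_dot_le R hR (fun a => A' a i)
    rw [col_dot A' hA', if_pos rfl, ← entry_eq] at this
    linarith
  · intro i
    have := neg_orth_dot_le R hR (fun a => A' a i)
    rw [col_dot A' hA', if_pos rfl, ← entry_eq] at this
    linarith
  · have := tr_compress R hR A' hA'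
    rw [sum_sub_distrib]
    simp only [sum_const, card_univ, Fintype.card_fin, nsmul_eq_mul, mul_one]
    linarith

/-- thin SVD of tall matrices -/
lemma svd_tall {n m : ℕ} (hmn : m ≤ n) (H : Matrix (Fin n) (Fin m) ℝ) :
    ∃ (A : Matrix (Fin n) (Fin m) ℝ) (B : Matrix (Fin m) (Fin m) ℝ) (τ : Fin m → ℝ),
      Aᵀ * A = 1 ∧ Bᵀ * B = 1 ∧ B * Bᵀ = 1 ∧ Antitone τ ∧ (∀ i, 0 ≤ τ i) ∧
      H = A * diagonal τ * Bᵀ := by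
  have hps : (Hᵀ * H).PosSemidef := by
    have := Matrix.posSemidef_conjTranspose_mul_self H
    simpa using this
  have hh : (Hᵀ * H).IsHermitian := hps.1
  -- sorted eigenvalues
  set π := Tuple.sort (fun i => - hh.eigenvalues i) with hπ
  set lam : Fin m → ℝ := fun i => hh.eigenvalues (π i) with hlam
  have hlam_anti : Antitone lam := by
    intro i j hij
    have := Tuple.monotone_sort (fun i => - hh.eigenvalues i) hij
    simpa [hlam] using this
  have hlam0 : ∀ i, 0 ≤ lam i := fun i => hps.eigenvalues_nonneg _
  set B : Matrix (Fin m) (Fin m) ℝ := Matrix.of fun a i => hh.eigenvectorBasis (π i) a with hBdef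
  have hBcol : ∀ i, (fun a => B a i) = ⇑(hh.eigenvectorBasis (π i)) := fun i => rfl
  have hB : Bᵀ * B = 1 := by
    ext i j
    rw [Matrix.mul_apply, Matrix.one_apply]
    have := (orthonormal_iff_ite.1 hh.eigenvectorBasis.orthonormal) (π i) (π j)
    rw [PiLp.inner_apply] at this
    simp only [EmbeddingLike.apply_eq_iff_eq] at this
    rw [← this]
    refine sum_congr rfl fun a _ => ?_
    simp [hBdef, mul_comm]
  have hB' : B * Bᵀ = 1 := mul_eq_one_comm.1 hB
  have heig : ∀ i, (Hᵀ * H) *ᵥ (fun a => B a i) = lam i • fun a => B a i := by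
    intro i
    rw [hBcol]
    exact hh.mulVec_eigenvectorBasis (π i)
  set c : Fin m → (Fin n → ℝ) := fun i => H *ᵥ fun a => B a i with hc
  have hcc : ∀ i j, c i ⬝ᵥ c j = if i = j then lam i else 0 := by
    intro i j
    rw [hc]
    simp only
    rw [dot_mulVec_T, mulVec_mulVec, heig, dotProduct_smul, col_dot B hB]
    split_ifs with h
    · rw [h]; simp
    · simp
  -- normalized family
  set v : Fin n → EuclideanSpace ℝ (Fin n) := fun i =>
    if h : (i : ℕ) < m then WithLp.toLp 2 ((Real.sqrt (lam ⟨i, h⟩))⁻¹ • c ⟨i, h⟩) else 0 with hv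
  set s : Set (Fin n) := {i | ∃ h : (i : ℕ) < m, lam ⟨i, h⟩ ≠ 0} with hs
  have hvs : Orthonormal ℝ (s.domRestrict v) := by
    rw [orthonormal_iff_ite]
    rintro ⟨i, hi, hi0⟩ ⟨j, hj, hj0⟩
    have e : inner ℝ (v i) (v j) = (Real.sqrt (lam ⟨i, hi⟩))⁻¹ * ((Real.sqrt (lam ⟨j, hj⟩))⁻¹ * (c ⟨i, hi⟩ ⬝ᵥ c ⟨j, hj⟩)) := by
      simp only [hv, hi, hj, dif_pos]
      rw [EuclideanSpace.inner_toLp_toLp]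
      simp only [star_trivial, dotProduct_smul, smul_dotProduct, smul_eq_mul]
      rw [dotProduct_comm]
    change inner ℝ (v i) (v j) = _
    rw [e, hcc]
    by_cases hij : i = j
    · subst hij
      simp only [if_true]
      have h1 : 0 < lam ⟨i, hi⟩ := lt_of_le_of_ne (hlam0 _) (Ne.symm hi0)
      have h2 : 0 < Real.sqrt (lam ⟨i, hi⟩) := Real.sqrt_pos.2 h1
      have h3 := Real.mul_self_sqrt h1.le
      field_simp
      linarith
    · have : ¬ ((⟨i, hi⟩ : Fin m) = ⟨j, hj⟩) := by
        simp only [Fin.mk.injEq]; exact fun h => hij (Fin.ext h)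
      rw [if_neg this, if_neg (by simpa using hij)]
      simp
  obtain ⟨b, hb⟩ := hvs.exists_orthonormalBasis_extension_of_card_eq (by simp)
  set A : Matrix (Fin n) (Fin m) ℝ := Matrix.of fun a i => b (Fin.castLE hmn i) a with hAdef
  have hA : Aᵀ * A = 1 := by
    ext i j
    rw [Matrix.mul_apply, Matrix.one_apply]
    have := (orthonormal_iff_ite.1 b.orthonormal) (Fin.castLE hmn i) (Fin.castLE hmn j)
    rw [PiLp.inner_apply] at this
    simp only [Fin.castLE_inj] at this
    rw [← this]
    refine sum_congr rfl fun a _ => ?_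
    simp [hAdef, mul_comm]
  refine ⟨A, B, fun i => Real.sqrt (lam i), hA, hB, hB', ?_, fun i => Real.sqrt_nonneg _, ?_⟩
  · intro i j hij
    exact Real.sqrt_le_sqrt (hlam_anti hij)
  · have : H * B = A * diagonal (fun i => Real.sqrt (lam i)) := by
      ext a i
      rw [mul_diagonal]
      have e1 : (H * B) a i = c i a := by simp [hc, mulVec, dotProduct, Matrix.mul_apply]
      rw [e1]
      by_cases h0 : lam i = 0
      · have : c i = 0 := by
          apply dotProduct_self_eq_zero.1
          rw [hcc, if_pos rfl, h0]
        rw [this, h0]; simp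
      · have hi : (Fin.castLE hmn i) ∈ s := ⟨i.isLt, h0⟩
        have h2 : 0 < Real.sqrt (lam i) := Real.sqrt_pos.2 (lt_of_le_of_ne (hlam0 _) (Ne.symm h0))
        have e2 : A a i = (Real.sqrt (lam i))⁻¹ * c i a := by
          simp only [hAdef, of_apply]
          rw [hb _ hi]
          simp [hv]
        rw [e2]
        field_simp
    rw [← this, Matrix.mul_assoc, hB', Matrix.mul_one]

/-- thin SVD -/
lemma svd_thin {n p m : ℕ} (hm : m = min n p) (H : Matrix (Fin n) (Fin p) ℝ) :
    ∃ (A : Matrix (Fin n) (Fin m) ℝ) (B : Matrix (Fin p) (Fin m) ℝ) (τ : Fin m → ℝ),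
      Aᵀ * A = 1 ∧ Bᵀ * B = 1 ∧ (B * Bᵀ = 1 ∨ A * Aᵀ = 1) ∧ Antitone τ ∧ (∀ i, 0 ≤ τ i) ∧
      H = A * diagonal τ * Bᵀ := by
  rcases le_total n p with h | h
  · rw [min_eq_left h] at hm
    subst hm
    obtain ⟨A, B, τ, h1, h2, h3, h4, h5, h6⟩ := svd_tall h Hᵀ
    refine ⟨B, A, τ, h2, h1, Or.inr h3, h4, h5, ?_⟩
    rw [← transpose_transpose H, h6]
    simp [Matrix.mul_assoc]
  · rw [min_eq_right h] at hm
    subst hm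
    obtain ⟨A, B, τ, h1, h2, h3, h4, h5, h6⟩ := svd_tall h H
    exact ⟨A, B, τ, h1, h2, Or.inl h3, h4, h5, h6⟩

lemma nuc_bound' {n p m : ℕ} (k : ℕ) (A A2 A' : Matrix (Fin n) (Fin m) ℝ)
    (B B2 B' : Matrix (Fin p) (Fin m) ℝ) (σ ζ τ : Fin m → ℝ)
    (hA : Aᵀ * A = 1) (hA2 : A2ᵀ * A2 = 1) (hA' : A'ᵀ * A' = 1)
    (hB : Bᵀ * B = 1) (hB2 : B2ᵀ * B2 = 1) (hB' : B'ᵀ * B' = 1)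
    (hor : B' * B'ᵀ = 1 ∨ A' * A'ᵀ = 1)
    (hζ : ∀ i, 0 ≤ ζ i) (hτ0 : ∀ i, 0 ≤ τ i) (hτ : Antitone τ)
    (hσk : ∀ i : Fin m, k ≤ (i : ℕ) → σ i = 0)
    (hZ : A2 * diagonal ζ * B2ᵀ = A * diagonal σ * Bᵀ + A' * diagonal τ * B'ᵀ) :
    ∑ i, σ i + ∑ i, τ i - 2 * ∑ i : Fin m, (if (i : ℕ) < k then τ i else 0) ≤ ∑ i, ζ i := by
  rcases hor with h | h
  · exact nuc_bound k A A2 A' B B2 B' σ ζ τ hA hA2 hA' hB hB2 hB' h hζ hτ0 hτ hσk hZ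
  · refine nuc_bound k B B2 B' A A2 A' σ ζ τ hB hB2 hB' hA hA2 hA' h hζ hτ0 hτ hσk ?_
    have := congrArg transpose hZ
    simpa [Matrix.mul_assoc] using this

lemma thin_of_svd {n₁ n₂ : ℕ} (X : Matrix (Fin n₁) (Fin n₂) ℝ) (σ : Fin (min n₁ n₂) → ℝ)
    (h : IsSVDVals X σ) : ∃ (A : Matrix (Fin n₁) (Fin (min n₁ n₂)) ℝ)
      (B : Matrix (Fin n₂) (Fin (min n₁ n₂)) ℝ), Aᵀ * A = 1 ∧ Bᵀ * B = 1 ∧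
      X = A * diagonal σ * Bᵀ := by
  obtain ⟨-, -, U, V, hU, hV, hX⟩ := h
  have hJ : ∀ n m : ℕ, ∀ h : m ≤ n, ((1 : Matrix (Fin n) (Fin n) ℝ).submatrix id (Fin.castLE h))ᵀ *
      ((1 : Matrix (Fin n) (Fin n) ℝ).submatrix id (Fin.castLE h)) = 1 := by
    intro n m h
    ext i j
    simp [Matrix.mul_apply, Matrix.one_apply, Fin.castLE_inj, eq_comm]
  set J1 := (1 : Matrix (Fin n₁) (Fin n₁) ℝ).submatrix id (Fin.castLE (min_le_left n₁ n₂)) with hJ1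
  set J2 := (1 : Matrix (Fin n₂) (Fin n₂) ℝ).submatrix id (Fin.castLE (min_le_right n₁ n₂)) with hJ2
  have hd : diagRect σ = J1 * diagonal σ * J2ᵀ := by
    ext i j
    rw [Matrix.mul_apply]
    simp only [mul_diagonal, transpose_apply, diagRect, of_apply, hJ1, hJ2, submatrix_apply, id,
      Matrix.one_apply]
    split_ifs with h
    · rw [sum_eq_single (⟨i, lt_min i.isLt (lt_of_eq_of_lt h j.isLt)⟩ : Fin (min n₁ n₂))]
      · have q1 : i = Fin.castLE (min_le_left n₁ n₂) ⟨i, lt_min i.isLt (lt_of_eq_of_lt h j.isLt)⟩ :=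
          Fin.ext rfl
        have q2 : j = Fin.castLE (min_le_right n₁ n₂) ⟨i, lt_min i.isLt (lt_of_eq_of_lt h j.isLt)⟩ :=
          Fin.ext h.symm
        rw [if_pos q1, if_pos q2]; ring
      · intro k _ hk
        rw [if_neg]
        · ring
        · intro hik
          exact hk (Fin.ext (congrArg Fin.val hik).symm)
      · simp
    · symm
      refine sum_eq_zero fun k _ => ?_
      by_cases h1 : i = Fin.castLE (min_le_left n₁ n₂) k
      · by_cases h2 : j = Fin.castLE (min_le_right n₁ n₂) k
        · exact absurd (by rw [h1, h2]; rfl) h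
        · rw [if_neg h2]; ring
      · rw [if_neg h1]; ring
  refine ⟨U * J1, V * J2, ?_, ?_, ?_⟩
  · rw [transpose_mul, Matrix.mul_assoc, ← Matrix.mul_assoc Uᵀ, hU, Matrix.one_mul, hJ]
  · rw [transpose_mul, Matrix.mul_assoc, ← Matrix.mul_assoc Vᵀ, hV, Matrix.one_mul, hJ]
  · rw [hX, hd, transpose_mul]
    simp only [Matrix.mul_assoc]

lemma l2_sq {p : ℕ} (x : Fin p → ℝ) : l2 x ^ 2 = x ⬝ᵥ x := by
  rw [l2, Real.sq_sqrt (sum_nonneg fun i _ => sq_nonneg _)]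
  exact sum_congr rfl fun i _ => sq _

lemma frob_sq {n p : ℕ} (X : Matrix (Fin n) (Fin p) ℝ) : frob X ^ 2 = trace (Xᵀ * X) := by
  have h0 : 0 ≤ ∑ i, ∑ j, (X i j) ^ 2 := sum_nonneg fun i _ => sum_nonneg fun j _ => sq_nonneg _
  rw [frob, Real.sq_sqrt h0, sum_comm, trace]
  refine sum_congr rfl fun j _ => ?_
  rw [diag_apply, Matrix.mul_apply]
  exact sum_congr rfl fun i _ => sq _

lemma frob_thin {n p m : ℕ} (A : Matrix (Fin n) (Fin m) ℝ) (B : Matrix (Fin p) (Fin m) ℝ)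
    (hA : Aᵀ * A = 1) (hB : Bᵀ * B = 1) (c : Fin m → ℝ) :
    frob (A * diagonal c * Bᵀ) ^ 2 = c ⬝ᵥ c := by
  rw [frob_sq, tr_thin]
  refine sum_congr rfl fun i _ => ?_
  have : Aᵀ * (A * diagonal c * Bᵀ) * B = diagonal c := by
    rw [Matrix.mul_assoc A, ← Matrix.mul_assoc Aᵀ, hA, Matrix.one_mul, Matrix.mul_assoc, hB,
      Matrix.mul_one]
  rw [this, diagonal_apply_eq]

lemma rank_thin {n p m : ℕ} (A : Matrix (Fin n) (Fin m) ℝ) (B : Matrix (Fin p) (Fin m) ℝ)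
    (c : Fin m → ℝ) :
    (A * diagonal c * Bᵀ).rank ≤ (univ.filter fun i => c i ≠ 0).card := by
  classical
  refine (rank_mul_le_left _ _).trans ((rank_mul_le_right _ _).trans ?_)
  rw [rank_diagonal, Fintype.card_subtype]

lemma sv_zero {n p m r : ℕ} (A : Matrix (Fin n) (Fin m) ℝ) (B : Matrix (Fin p) (Fin m) ℝ)
    (hA : Aᵀ * A = 1) (hB : Bᵀ * B = 1) (σ : Fin m → ℝ) (hσ : Antitone σ) (h0 : ∀ i, 0 ≤ σ i)
    (hr : (A * diagonal σ * Bᵀ).rank ≤ r) (i : Fin m) (hi : r ≤ (i : ℕ)) : σ i = 0 := by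
  classical
  have e : Aᵀ * (A * diagonal σ * Bᵀ) * B = diagonal σ := by
    rw [Matrix.mul_assoc A, ← Matrix.mul_assoc Aᵀ, hA, Matrix.one_mul, Matrix.mul_assoc, hB,
      Matrix.mul_one]
  have h1 : (diagonal σ).rank ≤ r := by
    rw [← e]
    exact (rank_mul_le_left _ _).trans ((rank_mul_le_right _ _).trans hr)
  rw [rank_diagonal, Fintype.card_subtype] at h1
  by_contra hne
  have hpos : 0 < σ i := lt_of_le_of_ne (h0 i) (Ne.symm hne)
  have hsub : Finset.Iic i ⊆ univ.filter fun i => σ i ≠ 0 := by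
    intro j hj
    rw [Finset.mem_Iic] at hj
    rw [mem_filter]
    exact ⟨mem_univ _, (lt_of_lt_of_le hpos (hσ hj)).ne'⟩
  have := card_le_card hsub
  rw [Fin.card_Iic] at this
  omega

lemma phi_tangent (α x z : ℝ) (hα : 0 < α) (hx : 0 ≤ x) (hz : 0 ≤ z) :
    phi α x - phi α z ≤ α / (1 + α * z) ^ 2 * (x - z) := by
  have hx' : 0 ≤ α * x := by positivity
  have hz' : 0 ≤ α * z := by positivity
  have h1 : 0 < 1 + α * x := by linarith
  have h2 : 0 < 1 + α * z := by linarith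
  rw [phi, phi, abs_of_nonneg hx, abs_of_nonneg hz]
  have : α / (1 + α * z) ^ 2 * (x - z) - (α * x / (1 + α * x) - α * z / (1 + α * z))
      = α ^ 2 * (x - z) ^ 2 / ((1 + α * x) * (1 + α * z) ^ 2) := by
    field_simp
    ring
  have h3 : 0 ≤ α ^ 2 * (x - z) ^ 2 / ((1 + α * x) * (1 + α * z) ^ 2) := by positivity
  linarith

theorem stmt5 {n₁ n₂ n₃ r : ℕ}
    (𝒜 : Matrix (Fin n₁) (Fin n₂) ℝ →ₗ[ℝ] (Fin n₃ → ℝ)) (δ α β : ℝ)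
    (hRIP : RankRIP 𝒜 (2 * r) δ) (hδ : δ ≤ 0.4663)
    (hα : 0 < α) (hβ0 : 0 < β) (hβ : β ≤ 1 / (20 * α))
    (X : Matrix (Fin n₁) (Fin n₂) ℝ) (hrank : X.rank ≤ r) :
    ∀ Z : Matrix (Fin n₁) (Fin n₂) ℝ, 𝒜 Z = 𝒜 X → Z ≠ X →
      ∀ σX σZ : Fin (min n₁ n₂) → ℝ, IsSVDVals X σX → IsSVDVals Z σZ →
        (∑ i, σX i) + β * ∑ i, phi α (σX i) <
        (∑ i, σZ i) + β * ∑ i, phi α (σZ i) := by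
  intro Z hZ hne σX σZ hX hZs
  obtain ⟨A, B, hA, hB, hXe⟩ := thin_of_svd X σX hX
  obtain ⟨A2, B2, hA2, hB2, hZe⟩ := thin_of_svd Z σZ hZs
  obtain ⟨A', B', τ, hA', hB', hor, hτ, hτ0, hHe⟩ := svd_thin rfl (Z - X)
  obtain ⟨hXa, hX0, -⟩ := hX
  obtain ⟨hZa, hZ0, -⟩ := hZs
  have hsum : A2 * diagonal σZ * B2ᵀ = A * diagonal σX * Bᵀ + A' * diagonal τ * B'ᵀ := by
    rw [← hXe, ← hZe, ← hHe]; abel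
  have hσk : ∀ i : Fin (min n₁ n₂), r ≤ (i : ℕ) → σX i = 0 :=
    sv_zero A B hA hB σX hXa hX0 (by rw [← hXe]; exact hrank)
  have hnuc := nuc_bound' r A A2 A' B B2 B' σX σZ τ hA hA2 hA' hB hB2 hB' hor hZ0 hτ0 hτ hσk hsum
  set x := ∑ i : Fin (min n₁ n₂), (if (i : ℕ) < r then τ i else 0) with hx
  set S := ∑ i, τ i with hS
  have hx0 : 0 ≤ x := sum_nonneg fun i _ => by split_ifs <;> simp [hτ0]
  -- the null space property
  have hnsp : x ≤ 0.53 * ((S - x) + x / 2) := by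
    rcases Nat.eq_zero_or_pos r with hr | hr
    · have hx00 : x = 0 := by rw [hx, hr]; simp
      have : 0 ≤ S := sum_nonneg fun i _ => hτ0 i
      rw [hx00]; linarith
    · let T : (Fin (min n₁ n₂) → ℝ) →ₗ[ℝ] (Fin n₃ → ℝ) :=
        { toFun := fun c => 𝒜 (A' * diagonal c * B'ᵀ)
          map_add' := fun c d => by
            rw [← map_add, ← Matrix.add_mul, ← Matrix.mul_add, diagonal_add]; rfl
          map_smul' := fun t c => by
            rw [RingHom.id_apply, ← map_smul, diagonal_smul, Matrix.mul_smul, Matrix.smul_mul] }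
      have hTd : ∀ c, T c = 𝒜 (A' * diagonal c * B'ᵀ) := fun c => rfl
      have key := vec_cs hr T δ hRIP.1 hδ (fun c hc => by
        have := hRIP.2.2 (A' * diagonal c * B'ᵀ) ((rank_thin A' B' c).trans hc)
        rw [frob_thin A' B' hA' hB', l2_sq, ← hTd] at this
        exact this) τ hτ hτ0 (by rw [hTd, ← hHe, map_sub, hZ, sub_self])
      have e : ∑ i, blk r τ 0 i = x := by
        refine sum_congr rfl fun i _ => ?_
        simp only [blk, Nat.div_eq_zero_iff, hr.ne', false_or]
      rw [e] at key
      exact key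
  -- strict positivity
  have hSpos : 0 < S := by
    have h1 : 0 ≤ S := sum_nonneg fun i _ => hτ0 i
    refine lt_of_le_of_ne h1 fun h => hne ?_
    have h2 : ∀ i, τ i = 0 := fun i =>
      (sum_eq_zero_iff_of_nonneg (fun i _ => hτ0 i)).1 h.symm i (mem_univ i)
    have h3 : τ = fun _ => 0 := funext h2
    rw [h3] at hHe
    have h4 : Z - X = 0 := by rw [hHe]; simp
    exact sub_eq_zero.1 h4
  set g := α * β with hg
  have hg0 : 0 < g := mul_pos hα hβ0
  have hg1 : g ≤ 1 / 20 := by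
    rw [le_div_iff₀ (by positivity)] at hβ
    rw [hg]; linarith
  set e : Fin (min n₁ n₂) → ℝ := fun i => g * (1 - 1 / (1 + α * σZ i) ^ 2) with he
  have hone : ∀ i, 1 ≤ (1 + α * σZ i) ^ 2 := fun i => by
    have := mul_nonneg hα.le (hZ0 i)
    nlinarith
  have he0 : ∀ i, 0 ≤ e i := fun i => by
    have : 1 / (1 + α * σZ i) ^ 2 ≤ 1 := by
      rw [div_le_one (by linarith [hone i])]; exact hone i
    exact mul_nonneg hg0.le (by linarith)
  have heg : ∀ i, e i ≤ g := fun i => by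
    have : 0 ≤ 1 / (1 + α * σZ i) ^ 2 := by positivity
    simp only [he]
    nlinarith
  have hea : Antitone e := by
    intro i j hij
    have h1 := hZa hij
    have h2 : 0 ≤ α * σZ j := mul_nonneg hα.le (hZ0 j)
    have h3 : α * σZ j ≤ α * σZ i := mul_le_mul_of_nonneg_left h1 hα.le
    have : 1 / (1 + α * σZ i) ^ 2 ≤ 1 / (1 + α * σZ j) ^ 2 :=
      one_div_le_one_div_of_le (by positivity) (by gcongr)
    exact mul_le_mul_of_nonneg_left (by linarith) hg0.le
  -- weighted triangle inequality
  have hw : ∑ i, e i * σZ i ≤ ∑ i, e i * σX i + g * S := by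
    set E := A2 * diagonal e * B2ᵀ with hE
    have t1 : trace ((A2 * diagonal σZ * B2ᵀ)ᵀ * E) = ∑ i, e i * σZ i := by
      rw [tr_thin]
      refine sum_congr rfl fun i _ => ?_
      have : A2ᵀ * E * B2 = diagonal e := by
        rw [hE, Matrix.mul_assoc A2, ← Matrix.mul_assoc A2ᵀ, hA2, Matrix.one_mul, Matrix.mul_assoc,
          hB2, Matrix.mul_one]
      rw [this, diagonal_apply_eq, mul_comm]
    obtain ⟨D, d1, d2, d3, d4⟩ := tr_two_thin A A2 B B2 σX e hA hB hA2 hB2 hX0 he0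
    have t2 := d4.trans (substoch σX e D hXa hX0 hea he0 d1 d2 d3)
    obtain ⟨D', c1, c2, c3, c4⟩ := tr_two_thin A' A2 B' B2 τ e hA' hB' hA2 hB2 hτ0 he0
    have t3 : ∑ i, ∑ j, τ i * e j * D' i j ≤ g * S := by
      rw [hS, mul_sum]
      refine sum_le_sum fun i _ => ?_
      calc ∑ j, τ i * e j * D' i j ≤ ∑ j, τ i * g * D' i j :=
            sum_le_sum fun j _ => mul_le_mul_of_nonneg_right
              (mul_le_mul_of_nonneg_left (heg j) (hτ0 i)) (c1 i j)
        _ = τ i * g * ∑ j, D' i j := by rw [mul_sum]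
        _ ≤ τ i * g * 1 := mul_le_mul_of_nonneg_left (c2 i) (mul_nonneg (hτ0 i) hg0.le)
        _ = g * τ i := by ring
    rw [← t1, hsum, transpose_add, Matrix.add_mul, trace_add]
    linarith
  -- tangent inequality
  have htan : β * ∑ i, phi α (σX i) - β * ∑ i, phi α (σZ i)
      ≤ g * (∑ i, σX i - ∑ i, σZ i) - (∑ i, e i * σX i - ∑ i, e i * σZ i) := by
    have h1 : ∀ i, β * phi α (σX i) - β * phi α (σZ i)
        ≤ (g * σX i - g * σZ i) - (e i * σX i - e i * σZ i) := by
      intro i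
      have := mul_le_mul_of_nonneg_left (phi_tangent α (σX i) (σZ i) hα (hX0 i) (hZ0 i)) hβ0.le
      have e2 : (g * σX i - g * σZ i) - (e i * σX i - e i * σZ i)
          = β * (α / (1 + α * σZ i) ^ 2 * (σX i - σZ i)) := by
        simp only [he, hg]; ring
      rw [e2]; linarith
    have h2 := sum_le_sum fun i (_ : i ∈ univ) => h1 i
    simp only [sum_sub_distrib, ← mul_sum] at h2
    linarith
  have hd : S - 2 * x ≤ ∑ i, σZ i - ∑ i, σX i := by linarith
  have hd2 := mul_le_mul_of_nonneg_left hd hg0.le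
  have hgx : g * x ≤ 1 / 20 * x := mul_le_mul_of_nonneg_right hg1 hx0
  nlinarith
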